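/- If G is a finite simple graph with n vertices, average degree Δ > 2, and girth g, then ⌊g/2⌋ ≤ log_{Δ-1}((Δ-2)/2 · n + 1). -/

import Mathlib

open SimpleGraph Real

/-
Below half the girth, the vertices reached by going straight on from a dart form a tree, and the
trees at the two ends of an edge are disjoint; so it suffices to bound from below the average over
all darts of the size of the `i`-th level of this tree. Taking logarithms makes the bound additive:
by concavity each level contributes at least `log (deg - 1)` per branching, and since reversal of
darts shows that the uniform distribution is stationary for the non-backtracking random walk, these
contributions average to `∑ v, deg v * log (deg v - 1) / ∑ v, deg v`. Convexity of
`x * log (x - 1)` on `[2, ∞)` bounds this below by `log (Δ - 1)`, so level `i` has average size at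
least `(Δ - 1) ^ i`. Minimum degree two is achieved beforehand by deleting vertices of degree less
than `Δ / 2`, which does not lower the average degree.
-/

section Jensen

theorem sum_log_le_card_mul_log {ι : Type*} {s : Finset ι} {x : ι → ℝ} (hx : ∀ i ∈ s, 0 < x i) :
    ∑ i ∈ s, log (x i) ≤ s.card * log ((∑ i ∈ s, x i) / s.card) := by
  rcases s.eq_empty_or_nonempty with rfl | hs
  · simp
  have hcard : (0 : ℝ) < s.card := by exact_mod_cast hs.card_pos
  have hjensen := strictConcaveOn_log_Ioi.concaveOn.le_map_sum (t := s)
    (w := fun _ ↦ (s.card : ℝ)⁻¹) (fun _ _ ↦ by positivity) (by simp [hcard.ne']) hx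
  simp only [smul_eq_mul, ← Finset.mul_sum] at hjensen
  rwa [inv_mul_le_iff₀ hcard, inv_mul_eq_div] at hjensen

theorem log_card_add_sum_log_div_card_le_log_sum {ι : Type*} {s : Finset ι} (hs : s.Nonempty)
    {x : ι → ℝ} (hx : ∀ i ∈ s, 0 < x i) :
    log s.card + (∑ i ∈ s, log (x i)) / s.card ≤ log (∑ i ∈ s, x i) := by
  have hcard : (0 : ℝ) < s.card := by exact_mod_cast hs.card_pos
  have hjensen := sum_log_le_card_mul_log hx
  rw [log_div (Finset.sum_pos hx hs).ne' hcard.ne', ← div_le_iff₀' hcard] at hjensen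
  linarith

/-- The hypothesis `hstat` says that the uniform distribution is stationary for the random walk that
moves from `a` to a uniformly random element of `next a`. -/
theorem sum_log_card_add_sum_log_le {α : Type*} [Fintype α] [DecidableEq α] {next : α → Finset α}
    (hne : ∀ a, (next a).Nonempty)
    (hstat : ∀ b, ∑ a with b ∈ next a, ((next a).card : ℝ)⁻¹ = 1)
    {x y : α → ℝ} (hx : ∀ a, 0 < x a) (hxy : ∀ a, ∑ b ∈ next a, x b ≤ y a) :
    ∑ a, log (next a).card + ∑ a, log (x a) ≤ ∑ a, log (y a) := by
  have haverage : ∑ b, log (x b) = ∑ a, (∑ b ∈ next a, log (x b)) / (next a).card :=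
    calc ∑ b, log (x b)
      _ = ∑ b, ∑ a with b ∈ next a, log (x b) / (next a).card := by
        simp_rw [div_eq_mul_inv, ← Finset.mul_sum, hstat, mul_one]
      _ = ∑ a, (∑ b ∈ next a, log (x b)) / (next a).card := by
        simp_rw [Finset.sum_div]
        exact Finset.sum_comm' (by simp)
  rw [haverage, ← Finset.sum_add_distrib]
  refine Finset.sum_le_sum fun a _ ↦ ?_
  calc log (next a).card + (∑ b ∈ next a, log (x b)) / (next a).card
    _ ≤ log (∑ b ∈ next a, x b) :=
      log_card_add_sum_log_div_card_le_log_sum (hne a) fun b _ ↦ hx b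
    _ ≤ log (y a) := log_le_log (Finset.sum_pos (fun b _ ↦ hx b) (hne a)) (hxy a)

theorem convexOn_mul_log_sub_one : ConvexOn ℝ (Set.Ici 2) fun x : ℝ ↦ x * log (x - 1) := by
  have hne {x : ℝ} (hx : 2 ≤ x) : x - 1 ≠ 0 := by linarith
  refine convexOn_of_hasDerivWithinAt2_nonneg (f' := fun x ↦ log (x - 1) + x / (x - 1))
    (f'' := fun x ↦ (x - 2) / (x - 1) ^ 2) (convex_Ici 2)
    (continuousOn_id.mul (ContinuousOn.log (by fun_prop) fun x ↦ hne)) ?_ ?_ ?_ <;>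
    rw [interior_Ici] <;> intro x hx
  · have hderiv := (hasDerivAt_id x).mul (((hasDerivAt_id x).sub_const 1).log (hne hx.le))
    refine (hderiv.congr_deriv ?_).hasDerivWithinAt
    simp [div_eq_mul_inv]
  · have hsub := (hasDerivAt_id x).sub_const 1
    have hderiv := (hsub.log (hne hx.le)).add ((hasDerivAt_id x).div hsub (hne hx.le))
    refine (hderiv.congr_deriv ?_).hasDerivWithinAt
    have := hne hx.le
    simp only [id]
    field_simp
    ring
  · have : 0 ≤ x - 2 := sub_nonneg.2 hx.le
    positivity

end Jensen

section Girth

variable {V : Type*} {G : SimpleGraph V}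

theorem eq_of_isPath_of_length_add_length_lt_egirth {u v : V} {p q : G.Walk u v} (hp : p.IsPath)
    (hq : q.IsPath) (h : ((p.length + q.length : ℕ) : ℕ∞) < G.egirth) : p = q := by
  by_contra hne
  obtain ⟨_, -, -, c, hc, hle⟩ := hp.exists_isCycle_length_le_add_of_ne hq hne
  exact ((egirth_le_length hc).trans (Nat.cast_le.2 hle)).not_gt h

theorem exists_isPath_cons_of_dist_le {v w x : V} (hvw : G.Adj v w) (hreach : G.Reachable v x)
    (hle : G.dist w x ≤ G.dist v x) :
    ∃ p : G.Walk w x, (Walk.cons hvw p).IsPath ∧ p.length = G.dist w x := by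
  classical
  obtain ⟨p, hp, hlen⟩ := (hvw.symm.reachable.trans hreach).exists_path_of_dist
  refine ⟨p, hp.cons fun hv ↦ ?_, hlen⟩
  have hdrop := dist_le (p.dropUntil v hv)
  have hsplit := congrArg Walk.length (p.take_spec hv)
  have htake : (p.takeUntil v hv).length ≠ 0 := fun h ↦ hvw.ne' (Walk.eq_of_length_eq_zero h)
  rw [Walk.length_append] at hsplit
  omega

theorem eq_of_adj_of_dist_lt_of_dist_le {v w w' x : V} (hvw : G.Adj v w) (hvw' : G.Adj v w')
    (hlt : G.dist w x < G.dist v x) (hle : G.dist w' x ≤ G.dist v x)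
    (hgirth : ((2 * G.dist v x + 1 : ℕ) : ℕ∞) < G.egirth) : w = w' := by
  have hreach : G.Reachable v x := .of_dist_ne_zero (by omega)
  obtain ⟨p, hp, hplen⟩ := exists_isPath_cons_of_dist_le hvw hreach hlt.le
  obtain ⟨q, hq, hqlen⟩ := exists_isPath_cons_of_dist_le hvw' hreach hle
  have heq := eq_of_isPath_of_length_add_length_lt_egirth hp hq
    ((Nat.cast_le.2 (by simp only [Walk.length_cons]; omega)).trans_lt hgirth)
  exact (Walk.cons.inj heq).1

end Girth

section Dart

variable {V : Type*} [Fintype V] (G : SimpleGraph V) [DecidableRel G.Adj]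

theorem sum_dart_snd {M : Type*} [AddCommMonoid M] (f : V → M) :
    ∑ d : G.Dart, f d.snd = ∑ v, G.degree v • f v := by
  classical
  calc ∑ d : G.Dart, f d.snd
    _ = ∑ d : G.Dart, f d.fst :=
      Dart.symm_involutive.bijective.sum_comp fun d : G.Dart ↦ f d.fst
    _ = ∑ v, G.degree v • f v := by
      simp_rw [← dart_fst_fiber_card_eq_degree, ← Finset.sum_const]
      exact (Finset.sum_fiberwise' _ _ f).symm

variable [DecidableEq V] {G}

/-- The darts that may follow `d` in a non-backtracking walk. -/
def nonBacktrackingNext (d : G.Dart) : Finset G.Dart :=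
  ({e | e.fst = d.snd} : Finset G.Dart).erase d.symm

theorem mem_nonBacktrackingNext {d e : G.Dart} :
    e ∈ nonBacktrackingNext d ↔ e ≠ d.symm ∧ e.fst = d.snd := by
  simp [nonBacktrackingNext]

theorem card_nonBacktrackingNext (d : G.Dart) :
    (nonBacktrackingNext d).card = G.degree d.snd - 1 := by
  rw [nonBacktrackingNext, Finset.card_erase_of_mem (by simp), dart_fst_fiber_card_eq_degree]

theorem nonBacktrackingNext_nonempty {d : G.Dart} (hd : 2 ≤ G.degree d.snd) :
    (nonBacktrackingNext d).Nonempty := by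
  rw [← Finset.card_pos, card_nonBacktrackingNext]
  exact Nat.sub_pos_of_lt hd

theorem symm_mem_nonBacktrackingNext_symm {d e : G.Dart} :
    d.symm ∈ nonBacktrackingNext e.symm ↔ e ∈ nonBacktrackingNext d := by
  rw [mem_nonBacktrackingNext, mem_nonBacktrackingNext, Dart.symm_symm, ne_comm]
  exact and_congr_right' eq_comm

theorem card_filter_mem_nonBacktrackingNext (e : G.Dart) :
    ({d | e ∈ nonBacktrackingNext d} : Finset G.Dart).card = G.degree e.fst - 1 := by
  refine .trans ?_ (card_nonBacktrackingNext e.symm)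
  exact Finset.card_bijective Dart.symm Dart.symm_involutive.bijective
    (by simp [symm_mem_nonBacktrackingNext_symm])

theorem sum_inv_card_nonBacktrackingNext {e : G.Dart} (he : 2 ≤ G.degree e.fst) :
    ∑ d with e ∈ nonBacktrackingNext d, ((nonBacktrackingNext d).card : ℝ)⁻¹ = 1 := by
  have hconst : ∀ d ∈ ({d | e ∈ nonBacktrackingNext d} : Finset G.Dart),
      ((nonBacktrackingNext d).card : ℝ)⁻¹ = ((G.degree e.fst - 1 : ℕ) : ℝ)⁻¹ := by
    intro d hd
    rw [card_nonBacktrackingNext, (mem_nonBacktrackingNext.1 (Finset.mem_filter.1 hd).2).2]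
  rw [Finset.sum_congr rfl hconst, Finset.sum_const, card_filter_mem_nonBacktrackingNext,
    nsmul_eq_mul, mul_inv_cancel₀]
  exact_mod_cast (Nat.sub_pos_of_lt he).ne'

end Dart

section DartLevel

variable {V : Type*} [Fintype V] {G : SimpleGraph V}

/-- The `i`-th level of the tree that grows out of the dart `d`: the vertices at distance `i` from
its head and `i + 1` from its tail. Since `i + 1 ≠ 0`, they lie in the component of `d`, even though
`G.dist` is `0` between different components. -/
noncomputable def dartLevel (i : ℕ) (d : G.Dart) : Finset V :=
  {x | G.dist d.snd x = i ∧ G.dist d.fst x = i + 1}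

theorem mem_dartLevel {i : ℕ} {d : G.Dart} {x : V} :
    x ∈ dartLevel i d ↔ G.dist d.snd x = i ∧ G.dist d.fst x = i + 1 := by
  simp [dartLevel]

theorem snd_mem_dartLevel_zero (d : G.Dart) : d.snd ∈ dartLevel 0 d := by
  simp [mem_dartLevel, d.adj]

theorem sum_card_dartLevel_le (k : ℕ) (d : G.Dart) :
    ∑ i ∈ Finset.range k, (dartLevel i d).card ≤
      ({x | G.dist d.fst x = G.dist d.snd x + 1} : Finset V).card := by
  have hlevel (i : ℕ) : dartLevel i d =
      ({x | G.dist d.fst x = G.dist d.snd x + 1} : Finset V).filter fun x ↦ G.dist d.snd x = i := by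
    ext x
    simp only [mem_dartLevel, Finset.mem_filter, Finset.mem_univ, true_and]
    omega
  simp_rw [hlevel, Finset.sum_card_fiberwise_eq_card_filter]
  exact Finset.card_filter_le _ _

theorem sum_card_dartLevel_add_card_dartLevel_symm_le (k : ℕ) (d : G.Dart) :
    ∑ i ∈ Finset.range k, ((dartLevel i d).card + (dartLevel i d.symm).card) ≤ Fintype.card V := by
  classical
  rw [Finset.sum_add_distrib]
  grw [sum_card_dartLevel_le, sum_card_dartLevel_le, ← Finset.card_union_of_disjoint,
    Finset.card_le_univ]
  refine Finset.disjoint_filter.2 fun x _ hx hx' ↦ ?_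
  simp only [Dart.symm_toProd, Prod.fst_swap, Prod.snd_swap] at hx'
  omega

theorem pairwiseDisjoint_dartLevel {i : ℕ} (hi : ((2 * i + 3 : ℕ) : ℕ∞) < G.egirth) (v : V) :
    {e : G.Dart | e.fst = v}.PairwiseDisjoint (dartLevel i) := by
  rintro e rfl e' he' hne
  refine Finset.disjoint_left.2 fun x hx hx' ↦ hne ?_
  have he' : e'.fst = e.fst := he'
  rw [mem_dartLevel] at hx hx'
  have hsnd : e.snd = e'.snd := eq_of_adj_of_dist_lt_of_dist_le e.adj (he' ▸ e'.adj) (x := x)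
    (by omega) (by omega) (by rwa [hx.2])
  exact Dart.ext _ _ (Prod.ext he'.symm hsnd)

variable [DecidableEq V] [DecidableRel G.Adj]

theorem dartLevel_subset_dartLevel_succ {i : ℕ} (hi : ((2 * i + 3 : ℕ) : ℕ∞) < G.egirth)
    {d e : G.Dart} (he : e ∈ nonBacktrackingNext d) : dartLevel i e ⊆ dartLevel (i + 1) d := by
  intro x hx
  rw [mem_dartLevel] at hx ⊢
  obtain ⟨hne, hfst⟩ := mem_nonBacktrackingNext.1 he
  rw [hfst] at hx
  refine ⟨hx.2, ?_⟩
  have hupper : G.dist d.fst x ≤ i + 2 := by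
    have := d.adj.reachable.dist_triangle_left x
    rw [dist_eq_one_iff_adj.2 d.adj] at this
    omega
  by_contra hfar
  have hsnd : e.snd = d.fst := eq_of_adj_of_dist_lt_of_dist_le (hfst ▸ e.adj) d.adj.symm
    (x := x) (by omega) (by omega) (by rwa [hx.2])
  exact hne (Dart.ext _ _ (Prod.ext hfst hsnd))

theorem sum_card_dartLevel_le_card_dartLevel_succ {i : ℕ}
    (hi : ((2 * i + 3 : ℕ) : ℕ∞) < G.egirth) (d : G.Dart) :
    ∑ e ∈ nonBacktrackingNext d, (dartLevel i e).card ≤ (dartLevel (i + 1) d).card := by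
  rw [← Finset.card_biUnion fun e he e' he' ↦ pairwiseDisjoint_dartLevel hi d.snd
    (mem_nonBacktrackingNext.1 he).2 (mem_nonBacktrackingNext.1 he').2]
  exact Finset.card_le_card
    (Finset.biUnion_subset.2 fun e he ↦ dartLevel_subset_dartLevel_succ hi he)

end DartLevel

section MinDegreeTwo

variable {V : Type*} [Fintype V] {G : SimpleGraph V} [DecidableRel G.Adj]

theorem dartLevel_nonempty (hdeg : ∀ v, 2 ≤ G.degree v) {i : ℕ}
    (hi : ((2 * i + 1 : ℕ) : ℕ∞) < G.egirth) (d : G.Dart) : (dartLevel i d).Nonempty := by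
  classical
  induction i generalizing d with
  | zero => exact ⟨d.snd, snd_mem_dartLevel_zero d⟩
  | succ i ih =>
    obtain ⟨e, he⟩ := nonBacktrackingNext_nonempty (hdeg d.snd)
    exact (ih ((Nat.cast_le.2 (by omega)).trans_lt hi) e).mono
      (dartLevel_subset_dartLevel_succ hi he)

theorem mul_sum_log_le_sum_log_card_dartLevel [DecidableEq V] (hdeg : ∀ v, 2 ≤ G.degree v)
    {i : ℕ} (hi : ((2 * i + 1 : ℕ) : ℕ∞) < G.egirth) :
    i * ∑ d : G.Dart, log (nonBacktrackingNext d).card ≤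
      ∑ d : G.Dart, log (dartLevel i d).card := by
  induction i with
  | zero => simpa using Finset.sum_nonneg fun d _ ↦ log_natCast_nonneg _
  | succ i ih =>
    have hi' : ((2 * i + 1 : ℕ) : ℕ∞) < G.egirth := (Nat.cast_le.2 (by omega)).trans_lt hi
    have hstep := sum_log_card_add_sum_log_le
      (fun d ↦ nonBacktrackingNext_nonempty (hdeg d.snd))
      (fun e ↦ sum_inv_card_nonBacktrackingNext (hdeg e.fst))
      (x := fun d ↦ ((dartLevel i d).card : ℝ)) (y := fun d ↦ ((dartLevel (i + 1) d).card : ℝ))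
      (fun d ↦ by exact_mod_cast (dartLevel_nonempty hdeg hi' d).card_pos)
      (fun d ↦ by exact_mod_cast sum_card_dartLevel_le_card_dartLevel_succ hi d)
    push_cast
    linarith [ih hi']

theorem card_dart_mul_log_le [DecidableEq V] (hdeg : ∀ v, 2 ≤ G.degree v) {δ : ℝ}
    (hδ : 1 < δ) (h : δ * Fintype.card V ≤ Fintype.card G.Dart) :
    Fintype.card G.Dart * log (δ - 1) ≤ ∑ d : G.Dart, log (nonBacktrackingNext d).card := by
  rcases isEmpty_or_nonempty V with _ | _
  · have : IsEmpty G.Dart := ⟨fun d ↦ isEmptyElim d.fst⟩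
    simp
  have hcard : (0 : ℝ) < Fintype.card V := by exact_mod_cast Fintype.card_pos
  have hdarts : (Fintype.card G.Dart : ℝ) = ∑ v, (G.degree v : ℝ) := by
    exact_mod_cast G.dart_card_eq_sum_degrees
  have hδle : δ ≤ Fintype.card G.Dart / Fintype.card V := (le_div_iff₀ hcard).2 h
  have hjensen := convexOn_mul_log_sub_one.map_sum_le (t := Finset.univ)
    (w := fun _ : V ↦ (Fintype.card V : ℝ)⁻¹) (p := fun v ↦ (G.degree v : ℝ))
    (fun _ _ ↦ by positivity) (by simp [hcard.ne'])
    fun v _ ↦ Set.mem_Ici.2 (by exact_mod_cast hdeg v)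
  simp only [smul_eq_mul, ← Finset.mul_sum, ← hdarts] at hjensen
  rw [mul_assoc, mul_le_mul_iff_right₀ (by positivity), inv_mul_eq_div] at hjensen
  calc Fintype.card G.Dart * log (δ - 1)
    _ ≤ Fintype.card G.Dart * log (Fintype.card G.Dart / Fintype.card V - 1 : ℝ) := by
      gcongr
    _ ≤ ∑ v, G.degree v * log (G.degree v - 1 : ℝ) := hjensen
    _ = ∑ d : G.Dart, log (nonBacktrackingNext d).card := by
      simp_rw [card_nonBacktrackingNext]
      rw [sum_dart_snd G fun v ↦ log (G.degree v - 1 : ℕ)]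
      refine Finset.sum_congr rfl fun v _ ↦ ?_
      rw [nsmul_eq_mul, Nat.cast_pred (zero_lt_two.trans_le (hdeg v))]

theorem card_dart_mul_pow_le_sum_card_dartLevel (hdeg : ∀ v, 2 ≤ G.degree v) {δ : ℝ} (hδ : 1 < δ)
    (h : δ * Fintype.card V ≤ Fintype.card G.Dart) {i : ℕ}
    (hi : ((2 * i + 1 : ℕ) : ℕ∞) < G.egirth) :
    Fintype.card G.Dart * (δ - 1) ^ i ≤ ∑ d : G.Dart, ((dartLevel i d).card : ℝ) := by
  classical
  rcases isEmpty_or_nonempty G.Dart with _ | _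
  · simp
  have hcard : (0 : ℝ) < Fintype.card G.Dart := by exact_mod_cast Fintype.card_pos
  have hlevel (d : G.Dart) : (0 : ℝ) < (dartLevel i d).card := by
    exact_mod_cast (dartLevel_nonempty hdeg hi d).card_pos
  have hlog : Fintype.card G.Dart * log ((δ - 1) ^ i) ≤ Fintype.card G.Dart *
      log ((∑ d : G.Dart, ((dartLevel i d).card : ℝ)) / Fintype.card G.Dart) :=
    calc Fintype.card G.Dart * log ((δ - 1) ^ i)
      _ = i * (Fintype.card G.Dart * log (δ - 1)) := by rw [log_pow, mul_left_comm]
      _ ≤ i * ∑ d : G.Dart, log (nonBacktrackingNext d).card := by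
        gcongr
        exact card_dart_mul_log_le hdeg hδ h
      _ ≤ ∑ d : G.Dart, log (dartLevel i d).card := mul_sum_log_le_sum_log_card_dartLevel hdeg hi
      _ ≤ _ := sum_log_le_card_mul_log fun d _ ↦ hlevel d
  rw [← le_div_iff₀' hcard]
  refine (log_le_log_iff (pow_pos (sub_pos.2 hδ) i) ?_).1 (le_of_mul_le_mul_left hlog hcard)
  exact div_pos (Finset.sum_pos (fun d _ ↦ hlevel d) Finset.univ_nonempty) hcard

theorem two_mul_geom_sum_le_card_of_two_le_degree [Nonempty V] (hdeg : ∀ v, 2 ≤ G.degree v) {δ : ℝ}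
    (hδ : 1 < δ) (h : δ * Fintype.card V ≤ Fintype.card G.Dart) {k : ℕ}
    (hk : ((2 * k : ℕ) : ℕ∞) ≤ G.egirth) :
    2 * ∑ i ∈ Finset.range k, (δ - 1) ^ i ≤ Fintype.card V := by
  have hdarts : (0 : ℝ) < Fintype.card G.Dart := lt_of_lt_of_le (by positivity) h
  have hlevel {i : ℕ} (hi : i ∈ Finset.range k) :
      Fintype.card G.Dart * (δ - 1) ^ i ≤ ∑ d : G.Dart, ((dartLevel i d).card : ℝ) := by
    refine card_dart_mul_pow_le_sum_card_dartLevel hdeg hδ h (lt_of_lt_of_le ?_ hk)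
    have := Finset.mem_range.1 hi
    exact Nat.cast_lt.2 (by omega)
  have hsymm : ∑ d : G.Dart, ∑ i ∈ Finset.range k, ((dartLevel i d.symm).card : ℝ) =
      ∑ d : G.Dart, ∑ i ∈ Finset.range k, ((dartLevel i d).card : ℝ) :=
    Dart.symm_involutive.bijective.sum_comp
      fun d : G.Dart ↦ ∑ i ∈ Finset.range k, ((dartLevel i d).card : ℝ)
  refine le_of_mul_le_mul_left ?_ hdarts
  calc Fintype.card G.Dart * (2 * ∑ i ∈ Finset.range k, (δ - 1) ^ i)
    _ = 2 * ∑ i ∈ Finset.range k, Fintype.card G.Dart * (δ - 1) ^ i := by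
      rw [mul_left_comm, Finset.mul_sum]
    _ ≤ 2 * ∑ i ∈ Finset.range k, ∑ d : G.Dart, ((dartLevel i d).card : ℝ) := by
      gcongr with i hi
      exact hlevel hi
    _ = ∑ d : G.Dart, ∑ i ∈ Finset.range k,
        ((dartLevel i d).card + (dartLevel i d.symm).card : ℝ) := by
      rw [Finset.sum_comm]
      simp_rw [Finset.sum_add_distrib, hsymm, two_mul]
    _ ≤ ∑ _d : G.Dart, (Fintype.card V : ℝ) := by
      gcongr with d
      exact_mod_cast sum_card_dartLevel_add_card_dartLevel_symm_le k d
    _ = Fintype.card G.Dart * Fintype.card V := by simp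

end MinDegreeTwo

section Peeling

universe u

theorem card_edgeFinset_le_card_edgeFinset_induce_compl_singleton_add_degree {V : Type*}
    [Fintype V] [DecidableEq V] (G : SimpleGraph V) [DecidableRel G.Adj] (v : V) :
    G.edgeFinset.card ≤ (G.induce {v}ᶜ).edgeFinset.card + G.degree v := by
  rw [card_edgeFinset_induce_compl_singleton, card_edgeFinset_deleteIncidenceSet]
  exact le_tsub_add

theorem exists_isIndContained_half_le_degree {V : Type u} [Fintype V] [Nonempty V]
    (G : SimpleGraph V) [DecidableRel G.Adj] {δ : ℝ}
    (h : δ * Fintype.card V ≤ 2 * G.edgeFinset.card) :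
    ∃ (W : Type u) (_ : Fintype W) (_ : Nonempty W) (H : SimpleGraph W) (_ : DecidableRel H.Adj),
      H ⊴ G ∧ δ * Fintype.card W ≤ 2 * H.edgeFinset.card ∧ ∀ w, δ / 2 ≤ H.degree w := by
  classical
  induction hn : Fintype.card V generalizing V with
  | zero => exact absurd hn Fintype.card_ne_zero
  | succ n ih =>
    by_cases! hdeg : ∀ v, δ / 2 ≤ G.degree v
    · exact ⟨V, _, ‹_›, G, _, .refl G, h, hdeg⟩
    obtain ⟨v, hv⟩ := hdeg
    have hcard : Fintype.card ({v}ᶜ : Set V) = n := by rw [Fintype.card_compl_set, hn]; simp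
    have hedges : (G.edgeFinset.card : ℝ) ≤ (G.induce {v}ᶜ).edgeFinset.card + G.degree v := by
      exact_mod_cast card_edgeFinset_le_card_edgeFinset_induce_compl_singleton_add_degree G v
    have hdense : δ * n < 2 * (G.induce {v}ᶜ).edgeFinset.card := by
      rw [hn] at h
      push_cast at h
      linarith
    have : Nonempty ({v}ᶜ : Set V) := by
      by_contra! hempty
      have hbot : G.induce {v}ᶜ = ⊥ := Subsingleton.elim _ _
      simp [hbot, ← hcard] at hdense
    obtain ⟨W, _, hW, H, _, hH, hHdense, hHdeg⟩ := ih (G.induce {v}ᶜ) (hcard ▸ hdense.le) hcard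
    exact ⟨W, _, hW, H, _, hH.trans ⟨Embedding.induce _⟩, hHdense, hHdeg⟩

theorem two_mul_geom_sum_le_card {V : Type*} [Fintype V] [Nonempty V] (G : SimpleGraph V)
    [DecidableRel G.Adj] {δ : ℝ} (hδ : 2 < δ)
    (h : δ * Fintype.card V ≤ 2 * G.edgeFinset.card) {k : ℕ}
    (hk : ((2 * k : ℕ) : ℕ∞) ≤ G.egirth) :
    2 * ∑ i ∈ Finset.range k, (δ - 1) ^ i ≤ Fintype.card V := by
  classical
  obtain ⟨W, _, _, H, _, hHG, hdense, hdeg⟩ := exists_isIndContained_half_le_degree G h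
  have hdeg_two (w : W) : 2 ≤ H.degree w := by
    have hone : (1 : ℝ) < H.degree w := by linarith [hdeg w]
    exact_mod_cast hone
  have hdarts : δ * Fintype.card W ≤ Fintype.card H.Dart := by
    rw [H.dart_card_eq_twice_card_edges]
    exact_mod_cast hdense
  obtain ⟨φ⟩ := hHG
  calc 2 * ∑ i ∈ Finset.range k, (δ - 1) ^ i
    _ ≤ (Fintype.card W : ℝ) := two_mul_geom_sum_le_card_of_two_le_degree hdeg_two
      (one_lt_two.trans hδ) hdarts (hk.trans (IsContained.egirth_le ⟨φ.toCopy⟩))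
    _ ≤ Fintype.card V := by exact_mod_cast Fintype.card_le_of_embedding φ.toEmbedding

end Peeling

/-- Moore bound for irregular graphs: if a finite simple graph `G` on `n` vertices
has average degree `Δ = 2|E|/n > 2` and contains a cycle (girth `g`), then
`⌊g/2⌋ ≤ log_{Δ-1}((Δ-2)/2 · n + 1)`. -/
theorem moore_bound_irregular {V : Type*} [Fintype V] [DecidableEq V]
    (G : SimpleGraph V) [DecidableRel G.Adj]
    (n : ℕ) (hn : n = Fintype.card V)
    (Δ : ℝ) (hΔdef : Δ = (2 * G.edgeFinset.card : ℝ) / n)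
    (hΔ : 2 < Δ) (hcyc : ¬ G.IsAcyclic) :
    ((G.girth / 2 : ℕ) : ℝ) ≤ Real.logb (Δ - 1) ((Δ - 2) / 2 * n + 1) := by
  have hn0 : n ≠ 0 := by
    rintro rfl
    norm_num [hΔdef] at hΔ
  have : Nonempty V := Fintype.card_pos_iff.1 (by omega)
  have hgirth : ((2 * (G.girth / 2) : ℕ) : ℕ∞) ≤ G.egirth :=
    (Nat.cast_le.2 (Nat.mul_div_le _ _)).trans G.egirth.natCast_toNat_le_self
  have hdense : Δ * Fintype.card V ≤ 2 * G.edgeFinset.card := by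
    rw [← hn, hΔdef, div_mul_cancel₀ _ (Nat.cast_ne_zero.2 hn0)]
  have hmoore := two_mul_geom_sum_le_card G hΔ hdense hgirth
  have : 0 < Δ - 2 := sub_pos.2 hΔ
  rw [Real.le_logb_iff_rpow_le (by linarith) (by positivity), Real.rpow_natCast, hn]
  calc (Δ - 1) ^ (G.girth / 2)
    _ = (Δ - 2) / 2 * (2 * ∑ i ∈ Finset.range (G.girth / 2), (Δ - 1) ^ i) + 1 := by
      linear_combination -geom_sum_mul (Δ - 1) (G.girth / 2)
    _ ≤ (Δ - 2) / 2 * Fintype.card V + 1 := by gcongr
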